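/- For every n ≥ 1, the number of semilinear n-quasigroups of order 4 equals 3^(n+1)·2^(2^n + 1) − 8·6^n. -/

import Mathlib

/-- The alphabet `Σ = {0,1,2,3}`. -/
abbrev V4 := Fin 4

/-- An `n`-quasigroup of order 4: for every point, index and value there is
exactly one way to complete along the line. -/
def IsNQuasigroup {n : ℕ} (f : (Fin n → V4) → V4) : Prop :=
  ∀ (a : Fin n → V4) (i : Fin n) (b : V4),
    ∃! x : V4, f (Function.update a i x) = b

/-- A reduced `n`-quasigroup: `f(0,…,0,a,0,…,0) = a`. -/
def IsReducedQ {n : ℕ} (f : (Fin n → V4) → V4) : Prop :=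
  ∀ (i : Fin n) (a : V4), f (Function.update (fun _ => 0) i a) = a

/-- `S_{a,b}(f)`. -/
def SCode {n : ℕ} (f : (Fin n → V4) → V4) (a b : V4) : Set (Fin n → V4) :=
  {x | f x = a ∨ f x = b}

/-- A linear double-code: `χ_S(x₁,…,xₙ) = χ_{S₁}(x₁) ⊕ ⋯ ⊕ χ_{Sₙ}(xₙ)`
for some two-element subsets `Sᵢ ⊆ Σ`. -/
def IsLinearDoubleCode {n : ℕ} (S : Set (Fin n → V4)) : Prop :=
  ∃ T : Fin n → Finset V4, (∀ i, (T i).card = 2) ∧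
    ∀ x : Fin n → V4, x ∈ S ↔ (∑ i, if x i ∈ T i then (1 : ZMod 2) else 0) = 1

/-- A semilinear `n`-quasigroup: `S_{a,b}(f)` is a linear double-code
for some `a ≠ b`. -/
def IsSemilinear {n : ℕ} (f : (Fin n → V4) → V4) : Prop :=
  ∃ a b : V4, a ≠ b ∧ IsLinearDoubleCode (SCode f a b)

namespace SL

def L (k : Fin 3) (x : Fin 4) : ZMod 2 :=
  if k = 0 then (if x = 1 ∨ x = 3 then 1 else 0)
  else if k = 1 then (if x = 2 ∨ x = 3 then 1 else 0)
  else (if x = 1 ∨ x = 2 then 1 else 0)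

def D (k : Fin 3) (s t : ZMod 2) : Fin 4 :=
  if L k 0 = s ∧ L (k+1) 0 = t then 0
  else if L k 1 = s ∧ L (k+1) 1 = t then 1
  else if L k 2 = s ∧ L (k+1) 2 = t then 2 else 3

lemma L_D : ∀ k s t, L k (D k s t) = s := by decide
lemma L_D' : ∀ k s t, L (k+1) (D k s t) = t := by decide
lemma D_L : ∀ k x, D k (L k x) (L (k+1) x) = x := by decide
lemma L_zero : ∀ k, L k 0 = 0 := by decide
lemma L_inj : ∀ k k', (∀ a, L k a = L k' a) → k = k' := by decide
lemma L_ext : ∀ k x y, L k x = L k y → L (k+1) x = L (k+1) y → x = y := by decide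
lemma z2 : ∀ a b : ZMod 2, (a = 1 ↔ b = 1) → a = b := by decide
lemma z2ne : ∀ a b c d : ZMod 2, a ≠ b → c ≠ d → a + c = b + d := by decide

lemma line1 : ∀ (k j : Fin 3) (u v0 v1 : ZMod 2) (b : Fin 4),
    ∃! x : Fin 4, D k (L j x + u) (L (j+1) x + if L j x = 0 then v0 else v1) = b := by
  unfold ExistsUnique; decide

lemma line2 : ∀ (j j' : Fin 3), j ≠ j' → ∀ (u v : ZMod 2) (b : Fin 4),
    ∃! x : Fin 4, D 0 (L j x + u) (L j' x + v) = b := by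
  unfold ExistsUnique; decide

lemma pairL : ∀ a b : Fin 4, a ≠ b → ∃ k e, ∀ y, (y = a ∨ y = b) ↔ L k y + e = 1 := by decide
lemma Lpair : ∀ k, ∃ a b : Fin 4, a ≠ b ∧ ∀ y, (y = a ∨ y = b) ↔ L k y = 1 := by decide
lemma setL : ∀ T : Finset (Fin 4), T.card = 2 →
    ∃ k e, ∀ y, (if y ∈ T then (1 : ZMod 2) else 0) = L k y + e := by decide
lemma Lset : ∀ k (c : ZMod 2), ∃ T : Finset (Fin 4), T.card = 2 ∧
    ∀ y, (if y ∈ T then (1 : ZMod 2) else 0) = L k y + c := by decide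

def A {n : ℕ} (k : Fin 3) (f : (Fin n → V4) → V4) : Prop :=
  ∃ (α : Fin n → Fin 3) (c : ZMod 2), ∀ x, L k (f x) = ∑ i, L (α i) (x i) + c

lemma semi_iff {n : ℕ} (hn : 1 ≤ n) (f : (Fin n → V4) → V4) :
    IsSemilinear f ↔ ∃ k, A k f := by
  constructor
  · rintro ⟨a, b, hab, T, hT, h⟩
    obtain ⟨k, e, hk⟩ := pairL a b hab
    choose α ε hα using fun i => setL (T i) (hT i)
    refine ⟨k, α, ∑ i, ε i + e, fun x => ?_⟩
    have h1 := h x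
    simp only [SCode, Set.mem_setOf_eq, hk, hα] at h1
    have h2 := z2 _ _ h1
    rw [Finset.sum_add_distrib] at h2
    rw [← add_assoc, ← h2, add_assoc, CharTwo.add_self_eq_zero, add_zero]
  · rintro ⟨k, α, c, h⟩
    obtain ⟨a, b, hab, hk⟩ := Lpair k
    choose T hT hT' using fun i => Lset (α i) (if i = (⟨0, hn⟩ : Fin n) then c else 0)
    refine ⟨a, b, hab, T, hT, fun x => ?_⟩
    simp only [SCode, Set.mem_setOf_eq, hk, hT', h, Finset.sum_add_distrib]
    simp

lemma sum_upd {n : ℕ} (G : Fin n → Fin 4 → ZMod 2) (a : Fin n → Fin 4) (i : Fin n) (x : Fin 4) :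
    ∑ j, G j (Function.update a i x j) = G i x + ∑ j ∈ Finset.univ.erase i, G j (a j) := by
  rw [← Finset.add_sum_erase _ _ (Finset.mem_univ i)]
  congr 1
  · simp
  · refine Finset.sum_congr rfl fun j hj => ?_
    rw [Function.update_of_ne (Finset.ne_of_mem_erase hj)]

lemma uniq {n : ℕ} {α β : Fin n → Fin 3} {c d : ZMod 2}
    (h : ∀ x : Fin n → Fin 4, ∑ i, L (α i) (x i) + c = ∑ i, L (β i) (x i) + d) :
    α = β ∧ c = d := by
  have hc : c = d := by simpa [L_zero] using h (fun _ => 0)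
  refine ⟨?_, hc⟩
  funext i
  refine L_inj _ _ fun a => ?_
  have := h (Function.update (fun _ => 0) i a)
  rw [sum_upd (fun j => L (α j)), sum_upd (fun j => L (β j)), hc] at this
  simpa [L_zero] using this

def Phi {n : ℕ} (k : Fin 3)
    (p : (Fin n → Fin 3) × ZMod 2 × ((Fin n → ZMod 2) → ZMod 2)) : (Fin n → V4) → V4 :=
  fun x => D k (∑ i, L (p.1 i) (x i) + p.2.1)
    (∑ i, L (p.1 i + 1) (x i) + p.2.2 (fun i => L (p.1 i) (x i)))

lemma Phi_inj {n : ℕ} (k : Fin 3) : Function.Injective (Phi (n := n) k) := by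
  rintro ⟨α, c, h⟩ ⟨β, d, g⟩ e
  have e1 : ∀ x, _ := fun x => congrArg (L k) (congrFun e x)
  have e2 : ∀ x, _ := fun x => congrArg (L (k+1)) (congrFun e x)
  simp only [Phi, L_D, L_D'] at e1 e2
  obtain ⟨rfl, rfl⟩ := uniq e1
  have : h = g := by
    funext y
    have := e2 (fun i => D (α i) (y i) 0)
    simpa [L_D] using this
  rw [this]

lemma Phi_q {n : ℕ} (k : Fin 3) (p) : IsNQuasigroup (Phi (n := n) k p) := by
  obtain ⟨α, c, h⟩ := p
  intro a i b
  have key := line1 k (α i) (∑ j ∈ Finset.univ.erase i, L (α j) (a j) + c)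
    (∑ j ∈ Finset.univ.erase i, L (α j + 1) (a j) +
      h (Function.update (fun j => L (α j) (a j)) i 0))
    (∑ j ∈ Finset.univ.erase i, L (α j + 1) (a j) +
      h (Function.update (fun j => L (α j) (a j)) i 1)) b
  convert key using 3 with x
  have hu : (fun j => L (α j) (Function.update a i x j)) =
      Function.update (fun j => L (α j) (a j)) i (L (α i) x) := by
    funext j
    exact Function.apply_update (fun j => L (α j)) a i x j
  simp only [Phi]
  rw [sum_upd (fun j => L (α j)), sum_upd (fun j => L (α j + 1)), hu]
  rw [add_assoc, add_assoc]
  congr 2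
  split_ifs with h0
  · rw [h0]
  · have : L (α i) x = 1 := by
      revert h0; generalize L (α i) x = z; revert z; decide
    rw [this]

lemma Phi_A {n : ℕ} (k : Fin 3) (p) : A k (Phi (n := n) k p) :=
  ⟨p.1, p.2.1, fun x => by simp [Phi, L_D]⟩

lemma Phi_surj {n : ℕ} (k : Fin 3) (f : (Fin n → V4) → V4) (hq : IsNQuasigroup f)
    (hA : A k f) : ∃ p, Phi k p = f := by
  obtain ⟨α, c, h⟩ := hA
  let g : (Fin n → V4) → ZMod 2 := fun x => L (k+1) (f x) + ∑ i, L (α i + 1) (x i)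
  have step : ∀ x i v, L (α i) v = L (α i) (x i) → g (Function.update x i v) = g x := by
    intro x i v hv
    by_cases hvx : v = x i
    · rw [hvx, Function.update_eq_self]
    have hx : ∀ G : Fin n → Fin 4 → ZMod 2,
        ∑ j, G j (x j) = G i (x i) + ∑ j ∈ Finset.univ.erase i, G j (x j) := by
      intro G
      rw [Finset.add_sum_erase _ (fun j => G j (x j)) (Finset.mem_univ i)]
    have hne : f (Function.update x i v) ≠ f x := by
      intro he
      apply hvx
      exact (hq x i (f x)).unique he (by rw [Function.update_eq_self])
    have h1 : L k (f (Function.update x i v)) = L k (f x) := by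
      rw [h, h, sum_upd (fun j => L (α j)), hv, hx (fun j => L (α j))]
    have h2 : L (k+1) (f (Function.update x i v)) ≠ L (k+1) (f x) :=
      fun h2 => hne (L_ext _ _ _ h1 h2)
    have h3 : L (α i + 1) v ≠ L (α i + 1) (x i) := fun h3 => hvx (L_ext _ _ _ hv h3)
    simp only [g]
    rw [sum_upd (fun j => L (α j + 1)), hx (fun j => L (α j + 1)), ← add_assoc, ← add_assoc,
      z2ne _ _ _ _ h2 h3]
  have gen : ∀ x x' : Fin n → V4, (∀ i, L (α i) (x' i) = L (α i) (x i)) → g x' = g x := by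
    intro x x' hxx
    have : ∀ s : Finset (Fin n), g (s.piecewise x' x) = g x := by
      intro s
      induction s using Finset.induction_on with
      | empty => simp
      | insert j s hj ih =>
        rw [Finset.piecewise_insert, step _ _ _ ?_, ih]
        rw [Finset.piecewise_eq_of_notMem _ _ _ hj, hxx]
    simpa using this Finset.univ
  refine ⟨(α, c, fun y => g (fun i => D (α i) (y i) 0)), ?_⟩
  funext x
  simp only [Phi]
  rw [gen x _ (fun i => L_D _ _ _), ← h]
  have : ∑ i, L (α i + 1) (x i) + g x = L (k+1) (f x) := by
    simp only [g]
    rw [add_comm, add_assoc, CharTwo.add_self_eq_zero, add_zero]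
  rw [this, D_L]

def Psi {n : ℕ} (p : (Fin n → {q : Fin 3 × Fin 3 // q.1 ≠ q.2}) × ZMod 2 × ZMod 2) :
    (Fin n → V4) → V4 :=
  fun x => D 0 (∑ i, L (p.1 i).1.1 (x i) + p.2.1) (∑ i, L (p.1 i).1.2 (x i) + p.2.2)

lemma Psi_inj {n : ℕ} : Function.Injective (Psi (n := n)) := by
  rintro ⟨α, c, h⟩ ⟨β, d, g⟩ e
  have e1 : ∀ x, _ := fun x => congrArg (L 0) (congrFun e x)
  have e2 : ∀ x, _ := fun x => congrArg (L (0+1)) (congrFun e x)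
  simp only [Psi, L_D, L_D'] at e1 e2
  obtain ⟨h1, rfl⟩ := uniq e1
  obtain ⟨h2, rfl⟩ := uniq e2
  have : α = β := by
    funext i
    exact Subtype.ext (Prod.ext (congrFun h1 i) (congrFun h2 i))
  rw [this]

lemma Psi_q {n : ℕ} (p) : IsNQuasigroup (Psi (n := n) p) := by
  obtain ⟨α, c, d⟩ := p
  intro a i b
  have key := line2 _ _ (α i).2 (∑ j ∈ Finset.univ.erase i, L (α j).1.1 (a j) + c)
    (∑ j ∈ Finset.univ.erase i, L (α j).1.2 (a j) + d) b
  convert key using 3 with x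
  simp only [Psi]
  rw [sum_upd (fun j => L (α j).1.1), sum_upd (fun j => L (α j).1.2), add_assoc, add_assoc]

lemma third : ∀ k k' : Fin 3, k ≠ k' → ∀ m m' : Fin 3, m ≠ m' → ∀ l, l ≠ k → l ≠ k' →
    ∃ j, ∀ y z, L l y = L k y + L k' y ∧ L j z = L m z + L m' z := by decide

lemma third0 : ∀ k k' : Fin 3, k ≠ k' → ∃ l, ∀ y, L l y = L k y + L k' y := by decide
lemma Lnc : ∀ l, ∃ b b', L l b ≠ L l b' := by decide

lemma ne_of {n : ℕ} {k k' : Fin 3} (hk : k ≠ k') {f : (Fin n → V4) → V4} (hq : IsNQuasigroup f)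
    {α β : Fin n → Fin 3} {c d : ZMod 2}
    (h1 : ∀ x, L k (f x) = ∑ i, L (α i) (x i) + c)
    (h2 : ∀ x, L k' (f x) = ∑ i, L (β i) (x i) + d) (i : Fin n) : α i ≠ β i := by
  intro he
  obtain ⟨l, hl⟩ := third0 k k' hk
  obtain ⟨b, b', hb⟩ := Lnc l
  obtain ⟨x, hx, -⟩ := hq (fun _ => 0) i b
  obtain ⟨x', hx', -⟩ := hq (fun _ => 0) i b'
  apply hb
  rw [← hx, ← hx', hl, hl, h1, h1, h2, h2]
  simp only [sum_upd (fun j => L (α j)), sum_upd (fun j => L (β j)), he, L_zero]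
  simp only [Finset.sum_const_zero, add_zero]
  have : ∀ u v c d : ZMod 2, u + c + (u + d) = v + c + (v + d) := by decide
  exact this _ _ _ _

lemma A_third {n : ℕ} {k k' l : Fin 3} (hk : k ≠ k') (hl : l ≠ k) (hl' : l ≠ k')
    {f : (Fin n → V4) → V4} (hq : IsNQuasigroup f)
    (h1 : A k f) (h2 : A k' f) : A l f := by
  obtain ⟨α, c, h1⟩ := h1
  obtain ⟨β, d, h2⟩ := h2
  have hne := ne_of hk hq h1 h2
  choose γ hγ using fun i => third k k' hk (α i) (β i) (hne i) l hl hl'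
  have hl3 : ∀ y, L l y = L k y + L k' y := by
    have : ∀ k k' : Fin 3, k ≠ k' → ∀ l, l ≠ k → l ≠ k' → ∀ y, L l y = L k y + L k' y := by decide
    exact this k k' hk l hl hl'
  refine ⟨γ, c + d, fun x => ?_⟩
  rw [hl3, h1, h2]
  simp only [fun i => (hγ i 0 (x i)).2, Finset.sum_add_distrib]
  ring

open Classical in
lemma card_A {n : ℕ} (k : Fin 3) :
    (Finset.univ.filter fun f : (Fin n → V4) → V4 => IsNQuasigroup f ∧ A k f).card =
      3 ^ n * (2 * 2 ^ (2 ^ n)) := by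
  have : (Finset.univ.filter fun f : (Fin n → V4) → V4 => IsNQuasigroup f ∧ A k f) =
      Finset.univ.image (Phi k) := by
    ext f
    simp only [Finset.mem_filter, Finset.mem_univ, true_and, Finset.mem_image]
    constructor
    · rintro ⟨h1, h2⟩
      exact Phi_surj k f h1 h2
    · rintro ⟨p, rfl⟩
      exact ⟨Phi_q k p, Phi_A k p⟩
  rw [this, Finset.card_image_of_injective _ (Phi_inj k)]
  simp [ZMod.card]

open Classical in
lemma card_AA {n : ℕ} :
    (Finset.univ.filter fun f : (Fin n → V4) → V4 => IsNQuasigroup f ∧ A 0 f ∧ A 1 f).card =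
      6 ^ n * 4 := by
  have : (Finset.univ.filter fun f : (Fin n → V4) → V4 => IsNQuasigroup f ∧ A 0 f ∧ A 1 f) =
      Finset.univ.image Psi := by
    ext f
    simp only [Finset.mem_filter, Finset.mem_univ, true_and, Finset.mem_image]
    constructor
    · rintro ⟨hq, ⟨α, c, h1⟩, ⟨β, d, h2⟩⟩
      refine ⟨(fun i => ⟨(α i, β i), ne_of (by decide) hq h1 h2 i⟩, c, d), ?_⟩
      funext x
      simp only [Psi]
      rw [← h1, ← h2]
      exact D_L 0 _
    · rintro ⟨p, rfl⟩
      refine ⟨Psi_q p, ⟨fun i => (p.1 i).1.1, p.2.1, fun x => ?_⟩,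
        ⟨fun i => (p.1 i).1.2, p.2.2, fun x => ?_⟩⟩
      · simp only [Psi, L_D]
      · exact L_D' 0 _ _
  rw [this, Finset.card_image_of_injective _ Psi_inj]
  have h6 : Fintype.card {q : Fin 3 × Fin 3 // q.1 ≠ q.2} = 6 := by decide
  rw [Finset.card_univ, Fintype.card_prod, Fintype.card_fun, h6]
  simp [ZMod.card]

end SL

/-- The number of semilinear `n`-quasigroups of order 4 equals
`3^(n+1)·2^(2^n + 1) − 8·6^n`. -/
theorem card_semilinear (n : ℕ) (hn : 1 ≤ n) :
    Nat.card {f : (Fin n → V4) → V4 // IsNQuasigroup f ∧ IsSemilinear f} =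
      3 ^ (n + 1) * 2 ^ (2 ^ n + 1) - 8 * 6 ^ n := by
  classical
  rw [Nat.card_eq_fintype_card, Fintype.card_subtype]
  have h0 := SL.card_A (n := n) 0
  have h1 := SL.card_A (n := n) 1
  have h2 := SL.card_A (n := n) 2
  have h3 := SL.card_AA (n := n)
  have key : (Finset.univ.filter fun f : (Fin n → V4) → V4 => IsNQuasigroup f ∧ SL.A 0 f).card +
      (Finset.univ.filter fun f : (Fin n → V4) → V4 => IsNQuasigroup f ∧ SL.A 1 f).card +
      (Finset.univ.filter fun f : (Fin n → V4) → V4 => IsNQuasigroup f ∧ SL.A 2 f).card =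
      (Finset.univ.filter fun f : (Fin n → V4) → V4 => IsNQuasigroup f ∧ IsSemilinear f).card +
      (Finset.univ.filter fun f : (Fin n → V4) → V4 =>
        IsNQuasigroup f ∧ SL.A 0 f ∧ SL.A 1 f).card * 2 := by
    simp only [Finset.card_filter, Finset.sum_mul, ← Finset.sum_add_distrib]
    refine Finset.sum_congr rfl fun f _ => ?_
    by_cases hq : IsNQuasigroup f
    · have a := SL.A_third (k := 0) (k' := 1) (l := 2) (by decide) (by decide) (by decide) hq
      have b := SL.A_third (k := 0) (k' := 2) (l := 1) (by decide) (by decide) (by decide) hq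
      have c := SL.A_third (k := 1) (k' := 2) (l := 0) (by decide) (by decide) (by decide) hq
      simp only [SL.semi_iff hn, hq, true_and, Fin.exists_fin_succ, Fin.exists_fin_zero]
      by_cases h0 : SL.A 0 f <;> by_cases h1 : SL.A 1 f <;> by_cases h2 : SL.A 2 f <;>
        simp_all
    · simp [hq]
  rw [h0, h1, h2, h3] at key
  have e : 3 ^ (n + 1) * 2 ^ (2 ^ n + 1) = 3 ^ n * (2 * 2 ^ (2 ^ n)) * 3 := by ring
  rw [e]
  omega
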